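/- Let P be a finite graded bounded Eulerian poset of rank r, i.e. μ_{st} = (−1)^{ρ_{st}} for all s ≤ t, so that ε defined by ε_{st}(x) = (x−1)^{ρ_{st}} is a (P,ρ)-kernel. Then the ε-Chow polynomial of P equals the h-polynomial of the barycentric subdivision of P; explicitly, ℋ_P(x) = Σ_{S ⊆ {1,…,r−1}} β_P(S)·x^{|S|}, where β_P is the flag h-vector of P. -/

import Mathlib

/-!
Let `F_{st} = ∑_c x^{|c|} (1 - x)^{ρ_{st} - 1 - |c|}`, summed over the chains `c` of the open
interval `(s, t)`; expanding the flag `h`-vector identifies `F_{0̂1̂}` with the right-hand side of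
the theorem. Removing the least element of a nonempty chain shows `F = x E F + (1 - x) E` in the
incidence algebra, where `E_{st} = (1 - x)^{ρ_{st}}`. The Eulerian condition says exactly that
`ε E = 1`, so multiplication by `ε` turns this recursion into `(ε - x) F = 1 - x`. Since
`(x - 1) ε̄ = ε - x`, cancelling `x - 1` leaves `ε̄ F = -1`, hence `F = -ε̄⁻¹ = ℋ`.
-/

open Finset Polynomial
open scoped Classical

noncomputable section

variable {α : Type*}

/-- Convolution product in the incidence algebra of a locally finite poset over `ℤ[x]`.
Only the values on intervals `s ≤ t` are relevant. -/
def conv [PartialOrder α] [LocallyFiniteOrder α] (a b : α → α → Polynomial ℤ) :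
    α → α → Polynomial ℤ :=
  fun s t => ∑ w ∈ Finset.Icc s t, a s w * b w t

/-- The identity `δ` of the incidence algebra. -/
def dlt [PartialOrder α] : α → α → Polynomial ℤ :=
  fun s t => if s = t then 1 else 0

/-- The involution `a ↦ a^rev`, given by `(a^rev)_{st}(x) = x^{ρ_{st}} a_{st}(1/x)`. -/
def rev (ρ : α → α → ℕ) (a : α → α → Polynomial ℤ) : α → α → Polynomial ℤ :=
  fun s t => (a s t).reflect (ρ s t)

/-- A weak rank function on a poset. -/
structure IsWeakRank [Preorder α] (ρ : α → α → ℕ) : Prop where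
  pos : ∀ ⦃s t : α⦄, s < t → 0 < ρ s t
  add : ∀ ⦃s w t : α⦄, s ≤ w → w ≤ t → ρ s t = ρ s w + ρ w t

/-- `κ` is a `(P,ρ)`-kernel: it lies in `I_ρ(P)`, is `1` on the diagonal, and `κ⁻¹ = κ^rev`. -/
structure IsKernel [PartialOrder α] [LocallyFiniteOrder α] (ρ : α → α → ℕ)
    (κ : α → α → Polynomial ℤ) : Prop where
  degLE : ∀ ⦃s t : α⦄, s ≤ t → (κ s t).natDegree ≤ ρ s t
  diag : ∀ s : α, κ s s = 1
  left : ∀ ⦃s t : α⦄, s ≤ t → conv (rev ρ κ) κ s t = dlt s t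
  right : ∀ ⦃s t : α⦄, s ≤ t → conv κ (rev ρ κ) s t = dlt s t

/-- The reduced kernel `κ̄`: `κ̄_{st} = κ_{st}/(x-1)` for `s < t` and `κ̄_{ss} = -1`. -/
def red [PartialOrder α] (κ : α → α → Polynomial ℤ) : α → α → Polynomial ℤ :=
  fun s t => if s = t then -1 else κ s t /ₘ (X - 1)

/-- `H` is the Chow function of `κ`, i.e. `H = -(κ̄)⁻¹`. -/
structure IsChow [PartialOrder α] [LocallyFiniteOrder α] (κ H : α → α → Polynomial ℤ) : Prop where
  left : ∀ ⦃s t : α⦄, s ≤ t → conv (red κ) H s t = -dlt s t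
  right : ∀ ⦃s t : α⦄, s ≤ t → conv H (red κ) s t = -dlt s t

/-- `f` is the right KLS function of the kernel `κ`. -/
structure IsRightKLS [PartialOrder α] [LocallyFiniteOrder α] (ρ : α → α → ℕ)
    (κ f : α → α → Polynomial ℤ) : Prop where
  diag : ∀ s : α, f s s = 1
  degLT : ∀ ⦃s t : α⦄, s < t → 2 * (f s t).natDegree < ρ s t
  rev_eq : ∀ ⦃s t : α⦄, s ≤ t → rev ρ f s t = conv κ f s t

/-- `g` is the left KLS function of the kernel `κ`. -/
structure IsLeftKLS [PartialOrder α] [LocallyFiniteOrder α] (ρ : α → α → ℕ)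
    (κ g : α → α → Polynomial ℤ) : Prop where
  diag : ∀ s : α, g s s = 1
  degLT : ∀ ⦃s t : α⦄, s < t → 2 * (g s t).natDegree < ρ s t
  rev_eq : ∀ ⦃s t : α⦄, s ≤ t → rev ρ g s t = conv g κ s t

/-- `p` is symmetric with center of symmetry `d/2`, i.e. `p(x) = x^d p(1/x)`. -/
def PolySymm (d : ℕ) (p : Polynomial ℤ) : Prop := p.natDegree ≤ d ∧ p.reflect d = p

/-- All coefficients of `p` are non-negative. -/
def PolyNonneg (p : Polynomial ℤ) : Prop := ∀ n, 0 ≤ p.coeff n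

/-- The coefficient sequence of `p` is unimodal. -/
def PolyUnimodal (p : Polynomial ℤ) : Prop :=
  ∃ j, (∀ i < j, p.coeff i ≤ p.coeff (i + 1)) ∧ ∀ i, j ≤ i → p.coeff (i + 1) ≤ p.coeff i

end

noncomputable section

variable {α : Type*}

/-- `mu` is the Möbius function of the poset: `mu = ζ⁻¹`. -/
def IsMobius [PartialOrder α] [LocallyFiniteOrder α] (mu : α → α → ℤ) : Prop :=
  (∀ s : α, mu s s = 1) ∧
  (∀ ⦃s t : α⦄, s < t → ∑ w ∈ Finset.Icc s t, mu s w = 0) ∧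
  (∀ ⦃s t : α⦄, s < t → ∑ w ∈ Finset.Icc s t, mu w t = 0)

/-- The characteristic function `χ = μ·ζ^rev`, i.e. `χ_{st}(x) = Σ_{s≤w≤t} μ_{sw} x^{ρ_{wt}}`. -/
def chi [PartialOrder α] [LocallyFiniteOrder α] (ρ : α → α → ℕ) (mu : α → α → ℤ) :
    α → α → Polynomial ℤ :=
  fun s t => ∑ w ∈ Finset.Icc s t, Polynomial.C (mu s w) * X ^ ρ w t

/-- Convolution `ζ^rev · a`, where `ζ^rev_{sw} = x^{ρ_{sw}}`.  Applied to the Chow function `H`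
of the kernel `χ` (whose left KLS function is `g = ζ`) it gives the left augmented Chow function
`G = g^rev · H`; applied to the right KLS function `f` it gives the `Z`-function `Z = g^rev·f`. -/
def zrevConv [PartialOrder α] [LocallyFiniteOrder α] (ρ : α → α → ℕ)
    (a : α → α → Polynomial ℤ) : α → α → Polynomial ℤ :=
  fun s t => ∑ w ∈ Finset.Icc s t, X ^ ρ s w * a w t

/-- `rk` witnesses that the finite bounded poset is graded: covering relations increase `rk`
by exactly one, `rk` is strictly monotone (automatic in the finite graded case), and `rk ⊥ = 0`. -/
structure GradedData [PartialOrder α] [BoundedOrder α] (rk : α → ℕ) : Prop where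
  cov : ∀ ⦃a b : α⦄, a ⋖ b → rk b = rk a + 1
  mono : StrictMono rk
  bot : rk (⊥ : α) = 0

/-- The weak rank function `ρ_{st} = rk t - rk s` induced by a rank function `rk`. -/
def rdiff (rk : α → ℕ) : α → α → ℕ := fun a b => rk b - rk a

end

noncomputable section

variable {α : Type*}

/-- The flag `f`-vector of a finite ranked poset: `α_P(S)` is the number of chains whose set of
ranks is exactly `S`. -/
def flagF [PartialOrder α] [Fintype α] (rk : α → ℕ) (S : Finset ℕ) : ℕ :=
  (Finset.univ.filter
      (fun C : Finset α => IsChain (· ≤ ·) (C : Set α) ∧ C.image rk = S)).card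

/-- The flag `h`-vector of a finite ranked poset:
`β_P(S) = Σ_{T ⊆ S} (-1)^{|S∖T|} α_P(T)`. -/
def flagH [PartialOrder α] [Fintype α] (rk : α → ℕ) (S : Finset ℕ) : ℤ :=
  ∑ T ∈ S.powerset, (-1) ^ (S.card - T.card) * (flagF rk T : ℤ)

end

/-! ### Weak rank functions -/

/-- The Eulerian condition for a weakly ranked poset: `(-1)^ρ` satisfies the recursion of the Möbius
function. -/
def IsEulerian {α : Type*} [PartialOrder α] [LocallyFiniteOrder α] (ρ : α → α → ℕ) : Prop :=
  ∀ ⦃s t : α⦄, s < t → ∑ w ∈ Icc s t, (-1 : ℤ) ^ ρ s w = 0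

lemma IsMobius.isEulerian {α : Type*} [PartialOrder α] [LocallyFiniteOrder α] {ρ : α → α → ℕ}
    {mu : α → α → ℤ} (hmu : IsMobius mu) (h : ∀ s t : α, s ≤ t → mu s t = (-1) ^ ρ s t) :
    IsEulerian ρ := fun s t hst => by
  rw [← hmu.2.1 hst]
  exact sum_congr rfl fun w hw => (h s w (mem_Icc.1 hw).1).symm

namespace IsWeakRank

lemma self_eq_zero {α : Type*} [Preorder α] {ρ : α → α → ℕ} (hρ : IsWeakRank ρ) (s : α) :
    ρ s s = 0 := by
  have := hρ.add (le_refl s) (le_refl s)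
  omega

lemma strictMonoOn {α : Type*} [Preorder α] {ρ : α → α → ℕ} (hρ : IsWeakRank ρ) (s : α) :
    StrictMonoOn (ρ s) (Set.Ici s) := fun a ha b _ hab => by
  have := hρ.pos hab
  rw [hρ.add ha hab.le]
  omega

end IsWeakRank

lemma isWeakRank_rdiff {α : Type*} [PartialOrder α] {rk : α → ℕ} (hrk : StrictMono rk) :
    IsWeakRank (rdiff rk) where
  pos s t hst := Nat.sub_pos_of_lt (hrk hst)
  add s w t hsw hwt := by
    have := hrk.monotone hsw
    have := hrk.monotone hwt
    simp only [rdiff]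
    omega

lemma injOn_of_isChain_of_strictMonoOn {α β : Type*} [PartialOrder α] [Preorder β] {f : α → β}
    {c : Set α} (hc : IsChain (· ≤ ·) c) (hf : StrictMonoOn f c) : c.InjOn f := by
  intro a ha b hb hab
  by_contra hne
  rcases hc.total ha hb with h | h
  · exact (hf ha hb (h.lt_of_ne hne)).ne hab
  · exact (hf hb ha (h.lt_of_ne' hne)).ne' hab

/-! ### Chains of an open interval -/

section OpenChains

variable {α : Type*} [PartialOrder α] [LocallyFiniteOrder α]

/-- The chains of the open interval `(s, t)`, i.e. the faces of its order complex, including the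
empty one. -/
noncomputable def openChains (s t : α) : Finset (Finset α) :=
  {c ∈ (Ioo s t).powerset | IsChain (· ≤ ·) (c : Set α)}

lemma mem_openChains {s t : α} {c : Finset α} :
    c ∈ openChains s t ↔ c ⊆ Ioo s t ∧ IsChain (· ≤ ·) (c : Set α) := by
  rw [openChains, mem_filter, mem_powerset]

lemma openChains_self (s : α) : openChains s s = {∅} := by
  ext c
  simp +contextual [mem_openChains, subset_empty]

lemma lt_of_mem_openChains {s t w : α} {c : Finset α} (hc : c ∈ openChains s t) (hw : w ∈ c) :
    s < w :=
  (mem_Ioo.1 ((mem_openChains.1 hc).1 hw)).1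

lemma notMem_of_mem_openChains {s t : α} {c : Finset α} (hc : c ∈ openChains s t) : s ∉ c :=
  fun hs => (lt_of_mem_openChains hc hs).false

lemma insert_mem_openChains {s t w : α} {c : Finset α} (hw : w ∈ Ioo s t)
    (hc : c ∈ openChains w t) : insert w c ∈ openChains s t := by
  obtain ⟨hcw, hchain⟩ := mem_openChains.1 hc
  refine mem_openChains.2 ⟨insert_subset hw (hcw.trans ?_), ?_⟩
  · exact Ioo_subset_Ioo_left (mem_Ioo.1 hw).1.le
  · rw [coe_insert]
    exact hchain.insert fun b hb _ => Or.inl (lt_of_mem_openChains hc hb).le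

lemma isLeast_insert_of_mem_openChains {t w : α} {c : Finset α} (hc : c ∈ openChains w t) :
    IsLeast (insert w c : Finset α) w :=
  ⟨mem_insert_self w c, fun _ hv => (mem_insert.1 hv).elim Eq.ge fun hv =>
    (lt_of_mem_openChains hc hv).le⟩

lemma exists_insert_eq_of_mem_openChains {s t : α} {c : Finset α} (hc : c ∈ openChains s t)
    (hne : c.Nonempty) : ∃ w ∈ Ioo s t, ∃ d ∈ openChains w t, insert w d = c := by
  obtain ⟨hcs, hchain⟩ := mem_openChains.1 hc
  obtain ⟨w, hw⟩ := c.exists_minimal hne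
  refine ⟨w, hcs hw.1, c.erase w, mem_openChains.2 ⟨fun v hv => ?_, ?_⟩, insert_erase hw.1⟩
  · obtain ⟨hvw, hv⟩ := mem_erase.1 hv
    have hle : w ≤ v := (hchain.total hw.1 hv).elim id (hw.2 hv)
    exact mem_Ioo.2 ⟨hle.lt_of_ne' hvw, (mem_Ioo.1 (hcs hv)).2⟩
  · exact hchain.mono (coe_subset.2 (erase_subset w c))

lemma sum_openChains {M : Type*} [AddCommMonoid M] (s t : α) (f : Finset α → M) :
    ∑ c ∈ openChains s t, f c =
      f ∅ + ∑ w ∈ Ioo s t, ∑ c ∈ openChains w t, f (insert w c) := by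
  have hempty : ∅ ∈ openChains s t := by simp [mem_openChains]
  rw [← add_sum_erase _ _ hempty, sum_sigma']
  congr 1
  refine (sum_bij (fun p _ => insert p.1 p.2) ?_ ?_ ?_ fun _ _ => rfl).symm
  · rintro ⟨w, c⟩ hp
    obtain ⟨hw, hc⟩ := mem_sigma.1 hp
    exact mem_erase.2 ⟨insert_ne_empty w c, insert_mem_openChains hw hc⟩
  · rintro ⟨w, c⟩ hp ⟨v, d⟩ hq heq
    have hc := (mem_sigma.1 hp).2
    have hd := (mem_sigma.1 hq).2
    simp only at hc hd heq
    obtain rfl : w = v := (isLeast_insert_of_mem_openChains hc).unique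
      (heq ▸ isLeast_insert_of_mem_openChains hd)
    rw [← erase_insert (notMem_of_mem_openChains hc), heq,
      erase_insert (notMem_of_mem_openChains hd)]
  · intro c hc
    obtain ⟨hne, hc⟩ := mem_erase.1 hc
    obtain ⟨w, hw, d, hd, rfl⟩ :=
      exists_insert_eq_of_mem_openChains hc (nonempty_iff_ne_empty.2 hne)
    exact ⟨⟨w, d⟩, mem_sigma.2 ⟨hw, hd⟩, rfl⟩

lemma IsWeakRank.card_le_of_mem_openChains {ρ : α → α → ℕ} (hρ : IsWeakRank ρ) {s t : α}
    {c : Finset α} (hc : c ∈ openChains s t) : #c ≤ ρ s t - 1 := by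
  obtain ⟨hcs, hchain⟩ := mem_openChains.1 hc
  have hmono : StrictMonoOn (ρ s) c :=
    (hρ.strictMonoOn s).mono fun w hw => (lt_of_mem_openChains hc hw).le
  have hmaps : Set.MapsTo (ρ s) c (Ioo 0 (ρ s t)) := fun w hw => by
    obtain ⟨hsw, hwt⟩ := mem_Ioo.1 (hcs hw)
    exact mem_Ioo.2 ⟨hρ.pos hsw, hρ.strictMonoOn s hsw.le (hsw.trans hwt).le hwt⟩
  simpa using card_le_card_of_injOn _ hmaps (injOn_of_isChain_of_strictMonoOn hchain hmono)

/-- The `h`-polynomial of the order complex of the open interval `(s, t)`, regarded as a complex of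
dimension `ρ s t - 2` and written through its faces. For a weak rank function the
subtractions do not truncate when `s < t`, and the value at `s = t` is `1`. -/
noncomputable def orderComplexHPoly (ρ : α → α → ℕ) (s t : α) : ℤ[X] :=
  ∑ c ∈ openChains s t, X ^ #c * (1 - X) ^ (ρ s t - 1 - #c)

lemma IsWeakRank.orderComplexHPoly_self {ρ : α → α → ℕ} (hρ : IsWeakRank ρ) (s : α) :
    orderComplexHPoly ρ s s = 1 := by
  simp [orderComplexHPoly, openChains_self, hρ.self_eq_zero]

lemma IsWeakRank.orderComplexHPoly_eq_add_sum {ρ : α → α → ℕ} (hρ : IsWeakRank ρ) (s t : α) :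
    orderComplexHPoly ρ s t = (1 - X) ^ (ρ s t - 1) +
      ∑ w ∈ Ioo s t, X * (1 - X) ^ (ρ s w - 1) * orderComplexHPoly ρ w t := by
  simp only [orderComplexHPoly]
  rw [sum_openChains, card_empty, pow_zero, one_mul, Nat.sub_zero]
  congr 1
  refine sum_congr rfl fun w hw => ?_
  rw [mul_sum]
  refine sum_congr rfl fun c hc => ?_
  obtain ⟨hsw, hwt⟩ := mem_Ioo.1 hw
  have hexp : ρ s t - 1 - (#c + 1) = (ρ s w - 1) + (ρ w t - 1 - #c) := by
    have := hρ.add hsw.le hwt.le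
    have := hρ.pos hsw
    have := hρ.pos hwt
    have := hρ.card_le_of_mem_openChains hc
    omega
  rw [card_insert_of_notMem (notMem_of_mem_openChains hc), hexp]
  ring

end OpenChains

/-! ### The incidence algebra -/

section Incidence

variable {R α : Type*} [PartialOrder α]

/-- The element of Mathlib's incidence algebra with the values of `f` on the intervals `s ≤ t`. -/
noncomputable def toIncidence [Zero R] (f : α → α → R) : IncidenceAlgebra R α where
  toFun s t := if s ≤ t then f s t else 0
  eq_zero_of_not_le' _ _ h := if_neg h

lemma toIncidence_apply [Zero R] (f : α → α → R) {s t : α} (hst : s ≤ t) :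
    toIncidence f s t = f s t :=
  if_pos hst

variable [LocallyFiniteOrder α]

lemma toIncidence_mul_apply [NonUnitalNonAssocSemiring R] (f g : α → α → R) (s t : α) :
    (toIncidence f * toIncidence g) s t = ∑ w ∈ Icc s t, f s w * g w t := by
  rw [IncidenceAlgebra.mul_apply]
  refine sum_congr rfl fun w hw => ?_
  obtain ⟨hsw, hwt⟩ := mem_Icc.1 hw
  rw [toIncidence_apply f hsw, toIncidence_apply g hwt]

/-- The element with value `x ^ ρ s t` on `s ≤ t`. For `x = X - 1` it is the kernel `ε`, and for
`x = 1 - X` it is the inverse of `ε` on an Eulerian poset. -/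
noncomputable def powIncidence [MonoidWithZero R] (ρ : α → α → ℕ) (x : R) : IncidenceAlgebra R α :=
  toIncidence fun s t => x ^ ρ s t

lemma IsEulerian.powIncidence_neg_mul [CommRing R] {ρ : α → α → ℕ} (hE : IsEulerian ρ)
    (hρ : IsWeakRank ρ) (x : R) : powIncidence ρ (-x) * powIncidence ρ x = 1 := by
  ext s t hst
  rw [powIncidence, powIncidence, toIncidence_mul_apply, IncidenceAlgebra.one_apply]
  rcases hst.eq_or_lt with rfl | hlt
  · simp [hρ.self_eq_zero]
  calc ∑ w ∈ Icc s t, (-x) ^ ρ s w * x ^ ρ w t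
      = ∑ w ∈ Icc s t, (-1) ^ ρ s w * x ^ ρ s t := sum_congr rfl fun w hw => by
        obtain ⟨hsw, hwt⟩ := mem_Icc.1 hw
        rw [hρ.add hsw hwt, neg_pow, pow_add, mul_assoc]
    _ = ((∑ w ∈ Icc s t, (-1 : ℤ) ^ ρ s w : ℤ) : R) * x ^ ρ s t := by
        push_cast
        rw [sum_mul]
    _ = if s = t then 1 else 0 := by rw [hE hlt, Int.cast_zero, zero_mul, if_neg hlt.ne]

end Incidence

/-! ### The Chow function -/

lemma smul_mul_eq_smul_one_of_eq_add {R A : Type*} [CommSemiring R] [Ring A] [Algebra R A]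
    {x y : R} {N E F : A} (hE : (y • N + x • 1) * E = 1) (hF : F = x • (E * F) + y • E) :
    y • (N * F) = y • 1 := by
  have h : y • (N * F) + x • F = y • 1 + x • F := calc
    y • (N * F) + x • F = (y • N + x • 1) * F := by
      rw [add_mul, smul_mul_assoc, smul_mul_assoc, one_mul]
    _ = (y • N + x • 1) * (x • (E * F) + y • E) := by rw [← hF]
    _ = y • 1 + x • F := by
      rw [mul_add, mul_smul_comm, mul_smul_comm, ← mul_assoc, hE, one_mul, add_comm]
  exact add_right_cancel h

section Chow

variable {α : Type*} [PartialOrder α] [LocallyFiniteOrder α] {ρ : α → α → ℕ}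

lemma IsWeakRank.one_sub_X_smul_toIncidence_neg_red (hρ : IsWeakRank ρ) :
    (1 - X : ℤ[X]) • toIncidence (-red fun s t : α => (X - 1 : ℤ[X]) ^ ρ s t) + (X : ℤ[X]) • 1 =
      powIncidence ρ (X - 1) := by
  have hmonic : (X - 1 : ℤ[X]).Monic := monic_X_sub_C 1
  ext1 s t hst
  simp only [IncidenceAlgebra.add_apply, IncidenceAlgebra.constSMul_apply, powIncidence,
    toIncidence_apply _ hst, IncidenceAlgebra.one_apply, smul_eq_mul, Pi.neg_apply, red]
  rcases hst.eq_or_lt with rfl | hlt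
  · simp [hρ.self_eq_zero]
  · rw [if_neg hlt.ne, if_neg hlt.ne, ← mul_pow_sub_one (hρ.pos hlt).ne',
      mul_divByMonic_cancel_left _ hmonic]
    ring

lemma IsWeakRank.toIncidence_orderComplexHPoly_eq_add (hρ : IsWeakRank ρ) :
    toIncidence (orderComplexHPoly ρ) =
      (X : ℤ[X]) • (powIncidence ρ (1 - X) * toIncidence (orderComplexHPoly ρ)) +
        (1 - X : ℤ[X]) • powIncidence (α := α) ρ (1 - X) := by
  ext1 s t hst
  simp only [IncidenceAlgebra.add_apply, IncidenceAlgebra.constSMul_apply, powIncidence,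
    toIncidence_mul_apply, toIncidence_apply _ hst, smul_eq_mul]
  rcases hst.eq_or_lt with rfl | hlt
  · simp [hρ.self_eq_zero, hρ.orderComplexHPoly_self]
  have hrec : (1 - X) * orderComplexHPoly ρ s t = (1 - X) ^ ρ s t +
      X * ∑ w ∈ Ioo s t, (1 - X) ^ ρ s w * orderComplexHPoly ρ w t := by
    rw [hρ.orderComplexHPoly_eq_add_sum, mul_add, mul_pow_sub_one (hρ.pos hlt).ne', mul_sum,
      mul_sum]
    congr 1
    refine sum_congr rfl fun w hw => ?_
    rw [← mul_pow_sub_one (hρ.pos (mem_Ioo.1 hw).1).ne']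
    ring
  rw [Icc_eq_cons_Ico hst, sum_cons, Ico_eq_cons_Ioo hlt, sum_cons,
    hρ.self_eq_zero, hρ.orderComplexHPoly_self]
  linear_combination hrec

lemma IsEulerian.toIncidence_neg_red_mul_orderComplexHPoly (hE : IsEulerian ρ)
    (hρ : IsWeakRank ρ) :
    toIncidence (-red fun s t : α => (X - 1 : ℤ[X]) ^ ρ s t) *
      toIncidence (orderComplexHPoly ρ) = 1 := by
  have hinv := hE.powIncidence_neg_mul hρ (1 - X : ℤ[X])
  rw [neg_sub (1 : ℤ[X]) X, ← hρ.one_sub_X_smul_toIncidence_neg_red] at hinv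
  have hsmul := smul_mul_eq_smul_one_of_eq_add hinv hρ.toIncidence_orderComplexHPoly_eq_add
  have hne : (1 - X : ℤ[X]) ≠ 0 := by
    rw [← neg_sub, neg_ne_zero]
    exact X_sub_C_ne_zero 1
  ext1 s t _
  exact mul_left_cancel₀ hne (congrFun (DFunLike.congr_fun hsmul s) t)

lemma IsChow.toIncidence_mul_neg_red {κ H : α → α → ℤ[X]} (hH : IsChow κ H) :
    toIncidence H * toIncidence (-red κ) = 1 := by
  ext1 s t hst
  have hconv : ∑ w ∈ Icc s t, H s w * red κ w t = -dlt s t := hH.right hst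
  simp only [toIncidence_mul_apply, Pi.neg_apply, mul_neg, sum_neg_distrib]
  rw [hconv, neg_neg, dlt, IncidenceAlgebra.one_apply]

theorem IsChow.eq_orderComplexHPoly {H : α → α → ℤ[X]}
    (hH : IsChow (fun s t : α => (X - 1 : ℤ[X]) ^ ρ s t) H) (hρ : IsWeakRank ρ)
    (hE : IsEulerian ρ) {s t : α} (hst : s ≤ t) : H s t = orderComplexHPoly ρ s t := by
  have hinv : toIncidence H = toIncidence (orderComplexHPoly ρ) :=
    left_inv_eq_right_inv hH.toIncidence_mul_neg_red
      (hE.toIncidence_neg_red_mul_orderComplexHPoly hρ)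
  rw [← toIncidence_apply H hst, hinv, toIncidence_apply _ hst]

end Chow

/-! ### Flag vectors -/

lemma sum_Icc_neg_one_pow_mul_pow_card {ι R : Type*} [DecidableEq ι] [CommRing R]
    {T N : Finset ι} (hT : T ⊆ N) (x : R) :
    ∑ S ∈ Icc T N, (-1) ^ (#S - #T) * x ^ #S = x ^ #T * (1 - x) ^ (#N - #T) := by
  have hinj : Set.InjOn (T ∪ ·) (N \ T).powerset := fun U hU V hV h => by
    have hU' : Disjoint T U := disjoint_sdiff.mono_right (mem_powerset.1 hU)
    have hV' : Disjoint T V := disjoint_sdiff.mono_right (mem_powerset.1 hV)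
    have h : T ∪ U = T ∪ V := h
    rw [← union_sdiff_cancel_left hU', h, union_sdiff_cancel_left hV']
  rw [Icc_eq_image_powerset hT, sum_image hinj, ← card_sdiff_of_subset hT,
    sub_eq_neg_add, ← sum_pow_mul_eq_add_pow, mul_sum]
  refine sum_congr rfl fun U hU => ?_
  have hdisj : Disjoint T U := disjoint_sdiff.mono_right (mem_powerset.1 hU)
  rw [card_union_of_disjoint hdisj, Nat.add_sub_cancel_left, one_pow, neg_pow x]
  ring

section Flag

variable {α : Type*} [PartialOrder α]

lemma sum_flagH_mul_pow_card [Fintype α] {R : Type*} [CommRing R] (rk : α → ℕ) (N : Finset ℕ)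
    (x : R) :
    ∑ S ∈ N.powerset, (flagH rk S : R) * x ^ #S =
      ∑ T ∈ N.powerset, flagF rk T • (x ^ #T * (1 - x) ^ (#N - #T)) := by
  calc ∑ S ∈ N.powerset, (flagH rk S : R) * x ^ #S
      = ∑ S ∈ N.powerset, ∑ T ∈ S.powerset,
          flagF rk T • ((-1) ^ (#S - #T) * x ^ #S) := sum_congr rfl fun S _ => by
        simp only [flagH, Int.cast_sum, sum_mul, nsmul_eq_mul]
        push_cast
        exact sum_congr rfl fun T _ => by ring
    _ = ∑ T ∈ N.powerset, ∑ S ∈ Icc T N,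
          flagF rk T • ((-1) ^ (#S - #T) * x ^ #S) := sum_comm' fun S T => by
        simp only [mem_powerset, mem_Icc]
        exact ⟨fun h => ⟨⟨h.2, h.1⟩, h.2.trans h.1⟩, fun h => ⟨h.1.2, h.1.1⟩⟩
    _ = ∑ T ∈ N.powerset, flagF rk T • (x ^ #T * (1 - x) ^ (#N - #T)) :=
        sum_congr rfl fun T hT => by
          rw [← smul_sum, sum_Icc_neg_one_pow_mul_pow_card (mem_powerset.1 hT)]

variable [LocallyFiniteOrder α] [BoundedOrder α] {rk : α → ℕ}

lemma mem_openChains_bot_top_iff_image_subset (hrk : StrictMono rk) {c : Finset α} :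
    c ∈ openChains ⊥ ⊤ ↔
      c.image rk ⊆ Ioo (rk ⊥) (rk ⊤) ∧ IsChain (· ≤ ·) (c : Set α) := by
  rw [mem_openChains, image_subset_iff]
  refine and_congr_left fun _ => forall₂_congr fun w _ => ?_
  rw [mem_Ioo, mem_Ioo]
  refine and_congr ⟨fun h => hrk h, fun h => ?_⟩ ⟨fun h => hrk h, fun h => ?_⟩
  · exact bot_lt_iff_ne_bot.2 fun hw => h.ne' (congrArg rk hw)
  · exact lt_top_iff_ne_top.2 fun hw => h.ne (congrArg rk hw)

variable [Fintype α]

lemma flagF_eq_card_filter_openChains (hrk : StrictMono rk) {T : Finset ℕ}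
    (hT : T ⊆ Ioo (rk ⊥) (rk ⊤)) :
    flagF rk T = #{c ∈ openChains (⊥ : α) ⊤ | c.image rk = T} := by
  rw [flagF]
  congr 1
  ext c
  simp only [mem_filter, mem_univ, true_and, mem_openChains_bot_top_iff_image_subset hrk]
  constructor
  · rintro ⟨hc, rfl⟩
    exact ⟨⟨hT, hc⟩, rfl⟩
  · rintro ⟨⟨-, hc⟩, hT⟩
    exact ⟨hc, hT⟩

lemma sum_flagF_smul {M : Type*} [AddCommMonoid M] (hrk : StrictMono rk) (g : ℕ → M) :
    ∑ T ∈ (Ioo (rk (⊥ : α)) (rk ⊤)).powerset, flagF rk T • g #T =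
      ∑ c ∈ openChains (⊥ : α) ⊤, g #c := by
  rw [← sum_fiberwise_of_maps_to (g := fun c : Finset α => c.image rk) fun c hc =>
    mem_powerset.2 ((mem_openChains_bot_top_iff_image_subset hrk).1 hc).1]
  refine sum_congr rfl fun T hT => ?_
  rw [flagF_eq_card_filter_openChains hrk (mem_powerset.1 hT), ← sum_const]
  refine sum_congr rfl fun c hc => ?_
  obtain ⟨hmem, rfl⟩ := mem_filter.1 hc
  rw [card_image_of_injOn
    (injOn_of_isChain_of_strictMonoOn (mem_openChains.1 hmem).2 (hrk.strictMonoOn _))]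

lemma IsWeakRank.orderComplexHPoly_bot_top {ρ : α → α → ℕ} (hρ : IsWeakRank ρ) :
    orderComplexHPoly ρ (⊥ : α) ⊤ =
      ∑ S ∈ (Icc 1 (ρ ⊥ (⊤ : α) - 1)).powerset, C (flagH (ρ ⊥) S) * X ^ #S := by
  have hmono : StrictMono (ρ ⊥) := fun a b hab => hρ.strictMonoOn ⊥ bot_le bot_le hab
  have hIoo : Icc 1 (ρ ⊥ (⊤ : α) - 1) = Ioo (ρ ⊥ (⊥ : α)) (ρ ⊥ ⊤) := by
    ext n
    rw [hρ.self_eq_zero, mem_Icc, mem_Ioo]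
    omega
  simp only [eq_intCast, hIoo, sum_flagH_mul_pow_card]
  rw [sum_flagF_smul hmono fun n =>
    (X : ℤ[X]) ^ n * (1 - X) ^ (#(Ioo (ρ ⊥ (⊥ : α)) (ρ ⊥ ⊤)) - n)]
  simp only [Nat.card_Ioo, hρ.self_eq_zero, Nat.sub_zero, orderComplexHPoly]

end Flag

theorem eulerian_chow_eq_h_poly_of_barycentric_general {α : Type*}
    [PartialOrder α] [BoundedOrder α] [Fintype α] [LocallyFiniteOrder α]
    {ρ : α → α → ℕ} (hρ : IsWeakRank ρ) (hE : IsEulerian ρ) {H : α → α → ℤ[X]}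
    (hH : IsChow (fun s t : α => (X - 1 : ℤ[X]) ^ ρ s t) H) :
    H ⊥ ⊤ = ∑ S ∈ (Icc 1 (ρ ⊥ (⊤ : α) - 1)).powerset, C (flagH (ρ ⊥) S) * X ^ #S :=
  (hH.eq_orderComplexHPoly hρ hE bot_le).trans hρ.orderComplexHPoly_bot_top

/-- Theorem 5.4: for a finite graded bounded Eulerian poset `P` of rank `r` (so that
`ε_{st}(x) = (x-1)^{ρ_{st}}` is a `(P,ρ)`-kernel), the `ε`-Chow polynomial equals the
`h`-polynomial of the barycentric subdivision of `P`:
`ℋ_P(x) = Σ_{S ⊆ {1,…,r-1}} β_P(S) x^{|S|}`. -/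
theorem eulerian_chow_eq_h_poly_of_barycentric {α : Type*}
    [PartialOrder α] [BoundedOrder α] [Fintype α] [LocallyFiniteOrder α]
    (rk : α → ℕ) (hg : GradedData rk)
    (mu : α → α → ℤ) (hmu : IsMobius mu)
    (heul : ∀ s t : α, s ≤ t → mu s t = (-1 : ℤ) ^ (rk t - rk s))
    (H : α → α → Polynomial ℤ)
    (hH : IsChow (fun s t : α => ((X : Polynomial ℤ) - 1) ^ (rk t - rk s)) H) :
    H ⊥ ⊤ = ∑ S ∈ (Finset.Icc 1 (rk (⊤ : α) - 1)).powerset,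
        Polynomial.C (flagH rk S) * X ^ S.card := by
  have hrk : rdiff rk ⊥ = rk := funext fun w => by rw [rdiff, hg.bot, Nat.sub_zero]
  simpa only [hrk] using eulerian_chow_eq_h_poly_of_barycentric_general
    (isWeakRank_rdiff hg.mono) (hmu.isEulerian heul) hH
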